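/- Let X ∈ S^n_+ and Y ∈ N_{S^n_+}(X), and let A = X + Y have eigenvalue decomposition A = PΛP^T with index sets α, β, γ of positive, zero, negative eigenvalues. Then X = P_α Λ_αα P_α^T and Y = P_γ Λ_γγ P_γ^T; in particular λ_i(A) = λ_i(X) for i ∈ α and λ_i(A) is a negative eigenvalue of Y for i ∈ γ. -/

import Mathlib

open Matrix BigOperators Finset

/-!
Normal cones are monotone: if `Y` is normal to a set at `X` and `C` is normal to it at `B`, then
`⟪Y, B - X⟫ ≤ 0` and `⟪C, X - B⟫ ≤ 0`. When `X + Y = B + C`, adding the two gives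
`‖B - X‖² ≤ 0`, so a matrix has at most one splitting into a point of the set and a normal vector
there. The positive and negative spectral parts of `A` form one such splitting for the positive
semidefinite cone, hence they are `X` and `Y`.
-/

section Spectral

open scoped ComplexOrder

variable {𝕜 m n : Type*} [RCLike 𝕜]

/-- The normal cone to a set `S` of matrices at `X`, for the real Frobenius inner product
`⟪Y, Z⟫ = Re tr (Yᴴ Z)`. Membership of `X` in `S` is not part of the definition. -/
def frobeniusNormalCone [Fintype m] [Fintype n] (S : Set (Matrix m n 𝕜)) (X : Matrix m n 𝕜) :
    Set (Matrix m n 𝕜) :=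
  {Y | ∀ Z ∈ S, RCLike.re (Yᴴ * (Z - X)).trace ≤ 0}

theorem mem_frobeniusNormalCone_iff_of_isHermitian [Fintype m] {S : Set (Matrix m m 𝕜)}
    {X Y : Matrix m m 𝕜} (hY : Y.IsHermitian) :
    Y ∈ frobeniusNormalCone S X ↔ ∀ Z ∈ S, RCLike.re ((Z - X) * Y).trace ≤ 0 := by
  simp only [frobeniusNormalCone, Set.mem_ofPred_eq, hY.eq, trace_mul_comm Y]

theorem eq_of_add_eq_add_of_mem_frobeniusNormalCone [Fintype m] [Fintype n]
    {S : Set (Matrix m n 𝕜)} {X B Y C : Matrix m n 𝕜} (hX : X ∈ S) (hB : B ∈ S)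
    (hY : Y ∈ frobeniusNormalCone S X) (hC : C ∈ frobeniusNormalCone S B)
    (h : X + Y = B + C) : X = B := by
  have hsub : B - X = Y - C := by
    rw [sub_eq_sub_iff_add_eq_add, ← h, add_comm]
  have htrace : ((B - X)ᴴ * (B - X)).trace =
      (Yᴴ * (B - X)).trace + (Cᴴ * (X - B)).trace := by
    rw [congrArg conjTranspose hsub, conjTranspose_sub, Matrix.sub_mul, trace_sub,
      ← neg_sub B X, Matrix.mul_neg, trace_neg, sub_eq_add_neg]
  have hnonneg : 0 ≤ ((B - X)ᴴ * (B - X)).trace :=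
    (posSemidef_conjTranspose_mul_self (B - X)).trace_nonneg
  have hre : RCLike.re ((B - X)ᴴ * (B - X)).trace ≤ 0 := by
    rw [htrace, map_add]
    exact add_nonpos (hY B hB) (hC X hX)
  have hzero : ((B - X)ᴴ * (B - X)).trace = 0 := by
    obtain ⟨hre', him⟩ := RCLike.nonneg_iff.mp hnonneg
    exact RCLike.ext (by simpa using le_antisymm hre hre') (by simpa using him)
  exact (sub_eq_zero.mp (trace_conjTranspose_mul_self_eq_zero_iff.mp hzero)).symm

/-- The spectral part `P_s Λ_ss P_sᴴ`, written as a sum of rank-one matrices: it keeps the columns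
of `P` and the eigenvalues `lam` with indices in `s`. -/
def spectralPart (P : Matrix m n 𝕜) (lam : n → ℝ) (s : Finset n) : Matrix m m 𝕜 :=
  ∑ i ∈ s, lam i • vecMulVec (P.col i) (star (P.col i))

theorem posSemidef_spectralPart [Finite m] (P : Matrix m n 𝕜) {lam : n → ℝ} {s : Finset n}
    (hs : ∀ i ∈ s, 0 ≤ lam i) : (spectralPart P lam s).PosSemidef :=
  posSemidef_sum s fun i hi => (posSemidef_vecMulVec_self_star (P.col i)).smul (hs i hi)

theorem isHermitian_spectralPart (P : Matrix m n 𝕜) (lam : n → ℝ) (s : Finset n) :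
    (spectralPart P lam s).IsHermitian := by
  simp [IsHermitian, spectralPart, conjTranspose_sum, conjTranspose_vecMulVec]

theorem spectralPart_univ [Fintype n] [DecidableEq n] (P : Matrix m n 𝕜) (lam : n → ℝ) :
    spectralPart P lam univ = P * diagonal (fun i => (lam i : 𝕜)) * Pᴴ := by
  ext a b
  rw [spectralPart, Matrix.sum_apply, mul_apply]
  refine sum_congr rfl fun i _ => ?_
  simp only [Matrix.smul_apply, vecMulVec_apply, Pi.star_apply, col_apply, mul_diagonal,
    conjTranspose_apply, RCLike.real_smul_eq_coe_mul]
  ring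

theorem spectralPart_pos_add_spectralPart_neg [Fintype n] (P : Matrix m n 𝕜) (lam : n → ℝ) :
    spectralPart P lam {i | 0 < lam i} + spectralPart P lam {i | lam i < 0} =
      spectralPart P lam univ := by
  simp only [spectralPart, sum_filter, ← sum_add_distrib]
  refine sum_congr rfl fun i _ => ?_
  rcases lt_trichotomy (lam i) 0 with h | h | h <;> simp [h, h.not_gt]

theorem trace_mul_spectralPart [Fintype m] (Z : Matrix m m 𝕜) (P : Matrix m n 𝕜)
    (lam : n → ℝ) (s : Finset n) :
    (Z * spectralPart P lam s).trace =
      ∑ i ∈ s, lam i • (star (P.col i) ⬝ᵥ Z *ᵥ P.col i) := by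
  simp only [spectralPart, Matrix.mul_sum, trace_sum, Matrix.mul_smul, trace_smul, mul_vecMulVec,
    trace_vecMulVec, dotProduct_comm]

theorem spectralPart_mul_spectralPart_of_disjoint [Fintype m] [DecidableEq n]
    {P : Matrix m n 𝕜} (hP : Pᴴ * P = 1) (lam mu : n → ℝ) {s t : Finset n}
    (hst : Disjoint s t) : spectralPart P lam s * spectralPart P mu t = 0 := by
  have horth : ∀ i ∈ s, ∀ j ∈ t, star (P.col i) ⬝ᵥ P.col j = 0 := fun i hi j hj =>
    (congrFun₂ hP i j).trans (one_apply_ne (disjoint_iff_ne.mp hst i hi j hj))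
  simp only [spectralPart, sum_mul_sum]
  refine sum_eq_zero fun i hi => sum_eq_zero fun j hj => ?_
  simp [vecMulVec_mul_vecMulVec, horth i hi j hj]

theorem re_trace_mul_spectralPart_nonpos [Fintype m] {Z : Matrix m m 𝕜}
    (hZ : Z.PosSemidef) (P : Matrix m n 𝕜) {lam : n → ℝ} {s : Finset n}
    (hs : ∀ i ∈ s, lam i ≤ 0) :
    RCLike.re (Z * spectralPart P lam s).trace ≤ 0 := by
  rw [trace_mul_spectralPart, map_sum]
  refine sum_nonpos fun i hi => ?_
  rw [RCLike.smul_re]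
  exact mul_nonpos_of_nonpos_of_nonneg (hs i hi) (hZ.re_dotProduct_nonneg _)

theorem spectralPart_mem_frobeniusNormalCone_of_disjoint [Fintype m] [DecidableEq n]
    {P : Matrix m n 𝕜} (hP : Pᴴ * P = 1) {lam : n → ℝ} {s t : Finset n}
    (hst : Disjoint s t) (ht : ∀ i ∈ t, lam i ≤ 0) :
    spectralPart P lam t ∈ frobeniusNormalCone {Z | Z.PosSemidef} (spectralPart P lam s) := by
  refine (mem_frobeniusNormalCone_iff_of_isHermitian (isHermitian_spectralPart P lam t)).mpr
    fun Z hZ => ?_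
  rw [Matrix.sub_mul, spectralPart_mul_spectralPart_of_disjoint hP lam lam hst, sub_zero]
  exact re_trace_mul_spectralPart_nonpos hZ P ht

theorem stmt4_general [Fintype m] [Fintype n] [DecidableEq n] {X Y A : Matrix m m 𝕜}
    {P : Matrix m n 𝕜} {lam : n → ℝ} (hX : X.PosSemidef)
    (hY : Y ∈ frobeniusNormalCone {Z | Z.PosSemidef} X) (hA : A = X + Y) (hP : Pᴴ * P = 1)
    (hdecomp : A = P * diagonal (fun i => (lam i : 𝕜)) * Pᴴ) :
    X = spectralPart P lam {i | 0 < lam i} ∧ Y = spectralPart P lam {i | lam i < 0} := by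
  have hsum : X + Y = spectralPart P lam {i | 0 < lam i} + spectralPart P lam {i | lam i < 0} := by
    rw [spectralPart_pos_add_spectralPart_neg, spectralPart_univ, ← hdecomp, hA]
  have hdisj : Disjoint ({i | 0 < lam i} : Finset n) ({i | lam i < 0} : Finset n) :=
    disjoint_filter.mpr fun i _ => lt_asymm
  have hpos : (spectralPart P lam {i | 0 < lam i}).PosSemidef :=
    posSemidef_spectralPart P fun i hi => (mem_filter.mp hi).2.le
  have hneg := spectralPart_mem_frobeniusNormalCone_of_disjoint hP hdisj
    fun i hi => (mem_filter.mp hi).2.le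
  have hXeq : X = spectralPart P lam {i | 0 < lam i} :=
    eq_of_add_eq_add_of_mem_frobeniusNormalCone hX hpos hY hneg hsum
  exact ⟨hXeq, add_left_cancel (hXeq ▸ hsum)⟩

end Spectral

/-- if `X` is PSD and `Y` lies in the normal cone of the PSD cone at `X`, and
`A = X + Y = P Λ Pᵀ` is an eigenvalue decomposition with eigenvalues in nonincreasing order,
then `X` is the positive-eigenvalue part and `Y` the negative-eigenvalue part of `A`. -/
theorem stmt4 {n : ℕ} (X Y A P : Matrix (Fin n) (Fin n) ℝ) (lam : Fin n → ℝ)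
    (hX : X.PosSemidef) (hYsymm : Y.IsSymm)
    (hNC : ∀ X' : Matrix (Fin n) (Fin n) ℝ, X'.PosSemidef → ((X' - X) * Y).trace ≤ 0)
    (hA : A = X + Y) (hP : Pᵀ * P = 1) (hlam : Antitone lam)
    (hdecomp : A = P * Matrix.diagonal lam * Pᵀ) :
    X = (∑ i ∈ Finset.univ.filter (fun i => 0 < lam i),
          lam i • Matrix.vecMulVec (fun k => P k i) (fun k => P k i))
    ∧ Y = (∑ i ∈ Finset.univ.filter (fun i => lam i < 0),
          lam i • Matrix.vecMulVec (fun k => P k i) (fun k => P k i)) :=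
  -- Over `ℝ`, `star` and `RCLike.re` are definitionally the identity.
  stmt4_general hX ((mem_frobeniusNormalCone_iff_of_isHermitian hYsymm).mpr hNC) hA hP hdecomp
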